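/- Let X be a complete, finite-rank median space, x ∈ X, σ an ultrafilter on 𝓗(X), and Ω ⊆ σ \ σ_x a minimal, strongly reduced UBS. Then for every d ≥ 0 there exists a constant C3 < +∞ (depending on Ω and d) such that h ⊆ k for all halfspaces h, k ∈ Ω with d(x,h) > C3 and d(x,k) ≤ d. -/

import Mathlib

open Metric Filter Set

universe u

/-- The metric interval between `a` and `b`: points lying between `a` and `b`. -/
def mInterval {X : Type u} [MetricSpace X] (a b : X) : Set X :=
  {c : X | dist a c + dist c b = dist a b}

/-- A subset of a metric space is convex if it contains the interval between any
two of its points. -/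
def MConvex {X : Type u} [MetricSpace X] (C : Set X) : Prop :=
  ∀ a ∈ C, ∀ b ∈ C, mInterval a b ⊆ C

/-- `w` is the median of `x, y, z`. -/
def IsMedianPoint {X : Type u} [MetricSpace X] (x y z w : X) : Prop :=
  w ∈ mInterval x y ∧ w ∈ mInterval y z ∧ w ∈ mInterval x z

/-- A median space: every triple of points has a unique median. -/
def IsMedianSpace (X : Type u) [MetricSpace X] : Prop :=
  ∀ x y z : X, ∃! w : X, IsMedianPoint x y z w

/-- A halfspace: a subset such that both it and its complement are convex. -/
def IsHalfspace {X : Type u} [MetricSpace X] (h : Set X) : Prop :=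
  MConvex h ∧ MConvex hᶜ

/-- Two halfspaces are transverse. -/
def Transv {X : Type u} [MetricSpace X] (h k : Set X) : Prop :=
  (h ∩ k).Nonempty ∧ (h ∩ kᶜ).Nonempty ∧ (hᶜ ∩ k).Nonempty ∧ (hᶜ ∩ kᶜ).Nonempty

/-- A wall: an unordered pair `{h, hᶜ}` with `h` a halfspace. -/
def IsWall {X : Type u} [MetricSpace X] (w : Set (Set X)) : Prop :=
  ∃ h : Set X, IsHalfspace h ∧ w = {h, hᶜ}

/-- Two walls are transverse if a side of the first is transverse to a side of the second. -/
def WallTransv {X : Type u} [MetricSpace X] (w₁ w₂ : Set (Set X)) : Prop :=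
  ∃ h ∈ w₁, ∃ k ∈ w₂, Transv h k

/-- `X` has rank at most `r`: every set of pairwise transverse walls has cardinality `≤ r`. -/
def RankLE (X : Type u) [MetricSpace X] (r : ℕ) : Prop :=
  ∀ W : Finset (Set (Set X)), (∀ w ∈ W, IsWall w) →
    (W : Set (Set (Set X))).Pairwise WallTransv → W.card ≤ r

/-- `X` has finite rank. -/
def HasFiniteRank (X : Type u) [MetricSpace X] : Prop :=
  ∃ r : ℕ, RankLE X r

/-- An ultrafilter on the set of halfspaces of `X`: a set of halfspaces, any two
of which intersect, containing exactly one of `h, hᶜ` for every halfspace `h`. -/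
def UltrafilterOn (X : Type u) [MetricSpace X] (σ : Set (Set X)) : Prop :=
  (∀ h ∈ σ, IsHalfspace h) ∧
  (∀ h ∈ σ, ∀ k ∈ σ, (h ∩ k).Nonempty) ∧
  ∀ h : Set X, IsHalfspace h → ((h ∈ σ ∧ hᶜ ∉ σ) ∨ (hᶜ ∈ σ ∧ h ∉ σ))

/-- The principal ultrafilter of halfspaces containing the point `x`. -/
def sigmaPt {X : Type u} [MetricSpace X] (x : X) : Set (Set X) :=
  {h : Set X | IsHalfspace h ∧ x ∈ h}

/-- A diverging chain of halfspaces (with respect to the basepoint `x`):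
a nested sequence of halfspaces whose distance from `x` tends to infinity. -/
def DivChain {X : Type u} [MetricSpace X] (x : X) (c : ℕ → Set X) : Prop :=
  (∀ n, IsHalfspace (c n)) ∧ (∀ n, c (n + 1) ⊆ c n) ∧
    Tendsto (fun n => infDist x (c n)) atTop atTop

/-- A set of halfspaces is inseparable if it contains every halfspace squeezed
between two of its members. -/
def Insep {X : Type u} [MetricSpace X] (Ω : Set (Set X)) : Prop :=
  ∀ j : Set X, IsHalfspace j → ∀ h ∈ Ω, ∀ k ∈ Ω, h ⊆ j → j ⊆ k → j ∈ Ω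

/-- A unidirectional boundary set (UBS) for the ultrafilter `σ`, with basepoint
`x`: an inseparable subset of `σ \ σ_x` containing a diverging chain. -/
def IsUBS {X : Type u} [MetricSpace X] (x : X) (σ Ω : Set (Set X)) : Prop :=
  Ω ⊆ σ \ sigmaPt x ∧ Insep Ω ∧ ∃ c : ℕ → Set X, DivChain x c ∧ ∀ n, c n ∈ Ω

/-- `Ω₁ ≼ Ω₂`: the halfspaces of `Ω₁ \ Ω₂` lie at uniformly bounded distance
from `x` (almost containment of UBS's). -/
def AlmostLE {X : Type u} [MetricSpace X] (x : X) (Ω₁ Ω₂ : Set (Set X)) : Prop :=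
  ∃ M : ℝ, ∀ h ∈ Ω₁ \ Ω₂, infDist x h ≤ M

/-- Equivalence of UBS's. -/
def UBSEquiv {X : Type u} [MetricSpace X] (x : X) (Ω₁ Ω₂ : Set (Set X)) : Prop :=
  AlmostLE x Ω₁ Ω₂ ∧ AlmostLE x Ω₂ Ω₁

/-- A UBS is minimal if every UBS almost contained in it almost contains it. -/
def MinimalUBS {X : Type u} [MetricSpace X] (x : X) (σ Ω : Set (Set X)) : Prop :=
  IsUBS x σ Ω ∧ ∀ Ω₀ : Set (Set X), IsUBS x σ Ω₀ → AlmostLE x Ω₀ Ω → AlmostLE x Ω Ω₀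

/-- A set of halfspaces is reduced if none of its members is transverse to a
diverging chain of halfspaces contained in it. -/
def ReducedUBS {X : Type u} [MetricSpace X] (x : X) (Ω : Set (Set X)) : Prop :=
  ∀ k ∈ Ω, ¬ ∃ c : ℕ → Set X, DivChain x c ∧ (∀ n, c n ∈ Ω) ∧ ∀ n, Transv k (c n)

/-- A set of halfspaces is strongly reduced if it is a finite disjoint union of
subsets, each totally ordered by inclusion and containing a diverging chain. -/
def StronglyReducedUBS {X : Type u} [MetricSpace X] (x : X) (Ω : Set (Set X)) : Prop :=
  ∃ (k : ℕ) (C : Fin k → Set (Set X)), 1 ≤ k ∧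
    (Set.univ : Set (Fin k)).PairwiseDisjoint C ∧
    (⋃ i, C i) = Ω ∧
    ∀ i, IsChain (· ⊆ ·) (C i) ∧ ∃ c : ℕ → Set X, DivChain x c ∧ ∀ n, c n ∈ C i

/-!
Let `c` be a diverging chain in a minimal UBS `Ω`. The halfspaces squeezed between two terms of `c`
form a UBS contained in `Ω`, so by minimality they include every member of `Ω` far enough from `x`;
in particular each such member contains a term of `c`. If `Ω` is moreover a finite union of chains,
finitely many far members of `Ω`, one from each chain, suffice for every near member to contain one
of them. Hence a single term of `c` lies in all near members. If `c` is taken inside one of the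
chains, the members of that chain farther than this term are contained in it; there are finitely
many chains to consider.
-/

theorem subset_of_isChain_of_infDist_lt {X : Type u} [PseudoMetricSpace X] {x : X}
    {C : Set (Set X)} {s t : Set X} (hC : IsChain (· ⊆ ·) C) (hs : s ∈ C) (ht : t ∈ C)
    (ht_ne : t.Nonempty) (hlt : infDist x t < infDist x s) : s ⊆ t :=
  (hC.total hs ht).resolve_right fun hts =>
    (infDist_le_infDist_of_subset hts ht_ne).not_gt hlt

section

variable {X : Type u} [MetricSpace X] {x : X} {σ Ω Ω₁ Ω₂ F : Set (Set X)} {c : ℕ → Set X}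

theorem UltrafilterOn.nonempty_of_mem {h : Set X} (hσ : UltrafilterOn X σ) (hh : h ∈ σ) :
    h.Nonempty :=
  (hσ.2.1 h hh h hh).left

theorem DivChain.antitone (hc : DivChain x c) : Antitone c :=
  antitone_nat_of_succ_le hc.2.1

theorem AlmostLE.of_subset (h : Ω₁ ⊆ Ω₂) : AlmostLE x Ω₁ Ω₂ :=
  ⟨0, fun _ hs => absurd (h hs.1) hs.2⟩

/-- The inseparable closure of a family of sets: all halfspaces squeezed between two members.
It is the smallest inseparable family containing `F` when `F` consists of halfspaces. -/
def insepClosure (F : Set (Set X)) : Set (Set X) :=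
  {j | IsHalfspace j ∧ ∃ h ∈ F, ∃ k ∈ F, h ⊆ j ∧ j ⊆ k}

theorem subset_insepClosure (hF : ∀ h ∈ F, IsHalfspace h) : F ⊆ insepClosure F :=
  fun h hh => ⟨hF h hh, h, hh, h, hh, subset_rfl, subset_rfl⟩

theorem insepClosure_subset (hΩ : Insep Ω) (hF : F ⊆ Ω) : insepClosure F ⊆ Ω := by
  rintro j ⟨hj, h, hh, k, hk, hhj, hjk⟩
  exact hΩ j hj h (hF hh) k (hF hk) hhj hjk

theorem insep_insepClosure : Insep (insepClosure F) := by
  rintro j hj h ⟨-, h', hh', -, -, hh'h, -⟩ k ⟨-, -, -, k', hk', -, hkk'⟩ hhj hjk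
  exact ⟨hj, h', hh', k', hk', hh'h.trans hhj, hjk.trans hkk'⟩

theorem IsUBS.insepClosure_range (hΩ : IsUBS x σ Ω) (hc : DivChain x c) (hcΩ : ∀ n, c n ∈ Ω) :
    IsUBS x σ (insepClosure (range c)) :=
  ⟨(insepClosure_subset hΩ.2.1 (range_subset_iff.2 hcΩ)).trans hΩ.1, insep_insepClosure, c, hc,
    fun n => subset_insepClosure (forall_mem_range.2 hc.1) (mem_range_self n)⟩

theorem MinimalUBS.almostLE_insepClosure_range (hΩ : MinimalUBS x σ Ω) (hc : DivChain x c)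
    (hcΩ : ∀ n, c n ∈ Ω) : AlmostLE x Ω (insepClosure (range c)) :=
  hΩ.2 _ (hΩ.1.insepClosure_range hc hcΩ)
    (.of_subset (insepClosure_subset hΩ.1.2.1 (range_subset_iff.2 hcΩ)))

theorem MinimalUBS.exists_forall_far_eventually_subset (hΩ : MinimalUBS x σ Ω)
    (hc : DivChain x c) (hcΩ : ∀ n, c n ∈ Ω) :
    ∃ M : ℝ, ∀ h ∈ Ω, M < infDist x h → ∀ᶠ n in atTop, c n ⊆ h := by
  obtain ⟨M, hM⟩ := hΩ.almostLE_insepClosure_range hc hcΩ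
  refine ⟨M, fun h hh hfar => ?_⟩
  have h_mem : h ∈ insepClosure (range c) := by
    by_contra h_notMem
    exact (hM h ⟨hh, h_notMem⟩).not_gt hfar
  obtain ⟨-, _, ⟨n, rfl⟩, -, -, hnh, -⟩ := h_mem
  filter_upwards [eventually_ge_atTop n] with m hm
  exact (hc.antitone hm).trans hnh

theorem StronglyReducedUBS.exists_finite_far_forall_near_exists_subset
    (hΩ : StronglyReducedUBS x Ω) (hne : ∀ h ∈ Ω, h.Nonempty) (M d : ℝ) :
    ∃ A ⊆ Ω, A.Finite ∧ (∀ a ∈ A, M < infDist x a) ∧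
      ∀ k ∈ Ω, infDist x k ≤ d → ∃ a ∈ A, a ⊆ k := by
  obtain ⟨r, C, -, -, rfl, hC⟩ := hΩ
  have exists_far (i : Fin r) : ∃ a ∈ C i, max M d < infDist x a := by
    obtain ⟨-, c, hc, hcC⟩ := hC i
    obtain ⟨n, hn⟩ := (hc.2.2.eventually_gt_atTop (max M d)).exists
    exact ⟨c n, hcC n, hn⟩
  choose a haC ha using exists_far
  refine ⟨range a, range_subset_iff.2 fun i => mem_iUnion_of_mem i (haC i), finite_range a,
    forall_mem_range.2 fun i => (le_max_left M d).trans_lt (ha i), fun k hk hkd => ?_⟩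
  obtain ⟨i, hki⟩ := mem_iUnion.1 hk
  exact ⟨a i, mem_range_self i, subset_of_isChain_of_infDist_lt (hC i).1 (haC i) hki (hne k hk)
    ((hkd.trans (le_max_right M d)).trans_lt (ha i))⟩

theorem MinimalUBS.eventually_forall_near_subset (hΩ : MinimalUBS x σ Ω)
    (hsr : StronglyReducedUBS x Ω) (hne : ∀ h ∈ Ω, h.Nonempty) (hc : DivChain x c)
    (hcΩ : ∀ n, c n ∈ Ω) (d : ℝ) : ∀ᶠ n in atTop, ∀ k ∈ Ω, infDist x k ≤ d → c n ⊆ k := by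
  obtain ⟨M, hM⟩ := hΩ.exists_forall_far_eventually_subset hc hcΩ
  obtain ⟨A, hAΩ, hA_fin, hA_far, hA⟩ := hsr.exists_finite_far_forall_near_exists_subset hne M d
  have eventually_subset_all : ∀ᶠ n in atTop, ∀ a ∈ A, c n ⊆ a :=
    (eventually_all_finite hA_fin).2 fun a ha => hM a (hAΩ ha) (hA_far a ha)
  filter_upwards [eventually_subset_all] with n hn k hk hkd
  obtain ⟨a, ha, hak⟩ := hA k hk hkd
  exact (hn a ha).trans hak

theorem MinimalUBS.exists_forall_far_mem_isChain_subset_near (hΩ : MinimalUBS x σ Ω)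
    (hsr : StronglyReducedUBS x Ω) (hne : ∀ h ∈ Ω, h.Nonempty) {C : Set (Set X)} (hCΩ : C ⊆ Ω)
    (hC : IsChain (· ⊆ ·) C) (hc : DivChain x c) (hcC : ∀ n, c n ∈ C) (d : ℝ) :
    ∃ R : ℝ, ∀ h ∈ C, ∀ k ∈ Ω, R < infDist x h → infDist x k ≤ d → h ⊆ k := by
  have hcΩ (n : ℕ) : c n ∈ Ω := hCΩ (hcC n)
  obtain ⟨n, hn⟩ := (hΩ.eventually_forall_near_subset hsr hne hc hcΩ d).exists
  exact ⟨infDist x (c n), fun h hh k hk hfar hkd =>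
    (subset_of_isChain_of_infDist_lt hC hh (hcC n) (hne _ (hcΩ n)) hfar).trans (hn k hk hkd)⟩

theorem far_halfspaces_contained_in_near_ones_general (hΩ : MinimalUBS x σ Ω)
    (hsr : StronglyReducedUBS x Ω) (hne : ∀ h ∈ Ω, h.Nonempty) (d : ℝ) :
    ∃ C₃ : ℝ, ∀ h ∈ Ω, ∀ k ∈ Ω, C₃ < infDist x h → infDist x k ≤ d → h ⊆ k := by
  have ⟨r, C, _, _, hCΩ, hC⟩ := hsr
  have exists_bound (i : Fin r) :
      ∃ R : ℝ, ∀ h ∈ C i, ∀ k ∈ Ω, R < infDist x h → infDist x k ≤ d → h ⊆ k := by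
    obtain ⟨hCi, c, hc, hcC⟩ := hC i
    exact hΩ.exists_forall_far_mem_isChain_subset_near hsr hne
      (hCΩ ▸ subset_iUnion C i) hCi hc hcC d
  choose R hR using exists_bound
  obtain ⟨B, hB⟩ := Finite.exists_le R
  refine ⟨B, fun h hh k hk hfar hkd => ?_⟩
  obtain ⟨i, hi⟩ := mem_iUnion.1 (hCΩ ▸ hh)
  exact hR i h hi k hk ((hB i).trans_lt hfar) hkd

end

/-- Let `X` be a complete, finite-rank median space, `x ∈ X`,
`σ` an ultrafilter on the halfspaces, and `Ω ⊆ σ \ σ_x` a minimal, strongly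
reduced UBS.  For every `d ≥ 0` there is a constant `C₃` such that `h ⊆ k` for
all `h, k ∈ Ω` with `d(x,h) > C₃` and `d(x,k) ≤ d`. -/
theorem far_halfspaces_contained_in_near_ones
    {X : Type u} [MetricSpace X] [CompleteSpace X]
    (hX : IsMedianSpace X) (hfr : HasFiniteRank X)
    (x : X) (σ : Set (Set X)) (hσ : UltrafilterOn X σ)
    (Ω : Set (Set X)) (hΩ : MinimalUBS x σ Ω) (hsr : StronglyReducedUBS x Ω) :
    ∀ d : ℝ, 0 ≤ d → ∃ C₃ : ℝ, ∀ h ∈ Ω, ∀ k ∈ Ω,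
      C₃ < infDist x h → infDist x k ≤ d → h ⊆ k := by
  have hne : ∀ h ∈ Ω, h.Nonempty := fun _ hh => hσ.nonempty_of_mem (hΩ.1.1 hh).1
  exact fun d _ => far_halfspaces_contained_in_near_ones_general hΩ hsr hne d
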